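/- arXiv:2304.11254 — 4 statements merged into one kernel-verified Lean document; each statement's English description precedes it below -/
import Mathlib

section
/- Let n ≥ 2 be even, let p be a prime with p ≡ 1 (mod n), let a ∈ F_p be an element of multiplicative order n, and set A = {1, a, …, a^{n-1}}. Then the set of s ∈ F_p for which (A, sA) is a symmetric ideal PTE solution of size n over F_p (i.e., A and sA are disjoint multisets with ∑_{j=0}^{n-1} a^{jk} = ∑_{j=0}^{n-1} (s a^j)^k in F_p for all 1 ≤ k ≤ n-1, and A = -A and sA = -sA) contains s = 0 and has at least (p-1)/n elements. -/
/-- Let `n ≥ 2` be even, `p ≡ 1 (mod n)` a prime, and let `a ∈ F_p` have multiplicative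
order `n`. Set `A = {1, a, …, a^(n-1)}`. Then the set of `s ∈ F_p` for which `(A, sA)`
is a symmetric ideal PTE solution of size `n` over `F_p` contains `s = 0` and has at
least `(p-1)/n` elements. -/
theorem geometric_symmetric_ideal_PTE_even (n : ℕ) (hn2 : 2 ≤ n) (heven : Even n)
    (p : ℕ) [hp : Fact p.Prime] (hcong : (p : ZMod n) = 1)
    (a : ZMod p) (ha : orderOf a = n) :
    0 ∈ {s : ZMod p |
        Disjoint ((Multiset.range n).map (fun j => a ^ j))
          (((Multiset.range n).map (fun j => a ^ j)).map (fun x => s * x)) ∧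
        (∀ k : ℕ, 1 ≤ k → k ≤ n - 1 →
          ∑ j ∈ Finset.range n, a ^ (j * k) = ∑ j ∈ Finset.range n, (s * a ^ j) ^ k) ∧
        ((Multiset.range n).map (fun j => a ^ j)).map (fun x => -x)
          = (Multiset.range n).map (fun j => a ^ j) ∧
        (((Multiset.range n).map (fun j => a ^ j)).map (fun x => s * x)).map (fun x => -x)
          = ((Multiset.range n).map (fun j => a ^ j)).map (fun x => s * x)} ∧
    (p - 1) / n ≤ {s : ZMod p |
        Disjoint ((Multiset.range n).map (fun j => a ^ j))
          (((Multiset.range n).map (fun j => a ^ j)).map (fun x => s * x)) ∧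
        (∀ k : ℕ, 1 ≤ k → k ≤ n - 1 →
          ∑ j ∈ Finset.range n, a ^ (j * k) = ∑ j ∈ Finset.range n, (s * a ^ j) ^ k) ∧
        ((Multiset.range n).map (fun j => a ^ j)).map (fun x => -x)
          = (Multiset.range n).map (fun j => a ^ j) ∧
        (((Multiset.range n).map (fun j => a ^ j)).map (fun x => s * x)).map (fun x => -x)
          = ((Multiset.range n).map (fun j => a ^ j)).map (fun x => s * x)}.ncard := by
  have hn0 : 0 < n := by omega
  have hpr : IsPrimitiveRoot a n := ha ▸ IsPrimitiveRoot.orderOf a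
  have hmem : ∀ x : ZMod p, x ∈ (Multiset.range n).map (fun j => a ^ j) ↔ x ^ n = 1 := by
    intro x
    rw [Multiset.mem_map]
    constructor
    · rintro ⟨j, -, rfl⟩
      rw [← pow_mul, mul_comm, pow_mul, hpr.pow_eq_one, one_pow]
    · intro hx
      haveI : NeZero n := ⟨hn0.ne'⟩
      obtain ⟨i, hi, h⟩ := hpr.eq_pow_of_pow_eq_one hx
      exact ⟨i, Multiset.mem_range.2 hi, h⟩
  have hnodup : ((Multiset.range n).map (fun j => a ^ j)).Nodup := by
    refine Multiset.Nodup.map_on ?_ (Multiset.nodup_range n)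
    intro x hx y hy h
    exact hpr.pow_inj (Multiset.mem_range.1 hx) (Multiset.mem_range.1 hy) h
  have hsym : ((Multiset.range n).map (fun j => a ^ j)).map (fun x => -x)
          = (Multiset.range n).map (fun j => a ^ j) := by
    refine (Multiset.Nodup.ext (hnodup.map neg_injective) hnodup).2 ?_
    intro x
    rw [Multiset.mem_map]
    constructor
    · rintro ⟨y, hy, rfl⟩
      rw [hmem] at hy ⊢
      rw [heven.neg_pow, hy]
    · intro hx
      refine ⟨-x, ?_, neg_neg x⟩
      rw [hmem] at hx ⊢
      rw [heven.neg_pow, hx]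
  have hsum : ∀ k : ℕ, 1 ≤ k → k ≤ n - 1 → ∑ j ∈ Finset.range n, a ^ (j * k) = 0 := by
    intro k h1 h2
    have hne : a ^ k ≠ 1 := hpr.pow_ne_one_of_pos_of_lt (by omega) (by omega)
    have h := mul_geom_sum (a ^ k) n
    rw [← pow_mul, mul_comm k n, pow_mul, hpr.pow_eq_one, one_pow, sub_self] at h
    rcases mul_eq_zero.1 h with h | h
    · exact absurd (sub_eq_zero.1 h) hne
    · rw [← h]
      refine Finset.sum_congr rfl fun j _ => ?_
      rw [← pow_mul, mul_comm]
  have key : ∀ s : ZMod p, s ^ n ≠ 1 → s ∈ {s : ZMod p |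
        Disjoint ((Multiset.range n).map (fun j => a ^ j))
          (((Multiset.range n).map (fun j => a ^ j)).map (fun x => s * x)) ∧
        (∀ k : ℕ, 1 ≤ k → k ≤ n - 1 →
          ∑ j ∈ Finset.range n, a ^ (j * k) = ∑ j ∈ Finset.range n, (s * a ^ j) ^ k) ∧
        ((Multiset.range n).map (fun j => a ^ j)).map (fun x => -x)
          = (Multiset.range n).map (fun j => a ^ j) ∧
        (((Multiset.range n).map (fun j => a ^ j)).map (fun x => s * x)).map (fun x => -x)
          = ((Multiset.range n).map (fun j => a ^ j)).map (fun x => s * x)} := by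
    intro s hs
    refine ⟨?_, ?_, hsym, ?_⟩
    · rw [Multiset.disjoint_left]
      intro x hx hx'
      obtain ⟨y, hy, rfl⟩ := Multiset.mem_map.1 hx'
      rw [hmem] at hx hy
      rw [mul_pow, hy, mul_one] at hx
      exact hs hx
    · intro k h1 h2
      have : ∀ j ∈ Finset.range n, (s * a ^ j) ^ k = s ^ k * a ^ (j * k) := by
        intro j _
        rw [mul_pow, pow_mul]
      rw [Finset.sum_congr rfl this, ← Finset.mul_sum, hsum k h1 h2, mul_zero]
    · conv_rhs => rw [← hsym]
      rw [Multiset.map_map, Multiset.map_map _ (fun x => -x)]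
      refine Multiset.map_congr rfl fun x _ => ?_
      simp
  refine ⟨key 0 (by rw [zero_pow hn0.ne']; exact zero_ne_one), ?_⟩
  have hp2 := hp.out.two_le
  have hdvd : n ∣ p - 1 := by
    rw [← ZMod.natCast_eq_zero_iff, Nat.cast_sub (by omega), hcong]
    simp
  obtain ⟨m, hm⟩ := hdvd
  have hcard : p - n ≤ {s : ZMod p | s ^ n ≠ 1}.ncard := by
    have h1 : {s : ZMod p | s ^ n = 1}.ncard ≤ n := by
      have : {s : ZMod p | s ^ n = 1} = ((Polynomial.nthRoots n (1 : ZMod p)).toFinset : Set (ZMod p)) := by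
        ext x
        simp [Polynomial.mem_nthRoots hn0]
      rw [this, Set.ncard_coe_finset]
      exact (Multiset.toFinset_card_le _).trans (Polynomial.card_nthRoots n 1)
    have h2 := Set.ncard_add_ncard_compl {s : ZMod p | s ^ n = 1}
    rw [Nat.card_zmod] at h2
    have h3 : {s : ZMod p | s ^ n = 1}ᶜ = {s : ZMod p | s ^ n ≠ 1} := rfl
    rw [h3] at h2
    omega
  refine le_trans ?_ (hcard.trans (Set.ncard_le_ncard (fun s hs => key s hs) (Set.toFinite _)))
  rw [hm, Nat.mul_div_cancel_left _ hn0]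
  have hm1 : 1 ≤ m := by
    rcases Nat.eq_zero_or_pos m with h | h
    · subst h; omega
    · exact h
  have hpe : p = n * m + 1 := by omega
  have : m + n ≤ p := by
    rw [hpe]
    nlinarith
  omega
end

section
/- Let A = {a_1,…,a_n} and B = {b_1,…,b_n} be multisets of integers such that ∏_{i=1}^n (x - a_i) - ∏_{i=1}^n (x - b_i) is a nonzero constant C, and let p be a prime dividing C. Then the multisets of reductions modulo p are equal: {a_1 mod p, …, a_n mod p} = {b_1 mod p, …, b_n mod p} as multisets in F_p. -/
open Polynomial in
/-- If `∏ (x - aᵢ) - ∏ (x - bᵢ)` is a nonzero constant `C` and `p` is a prime dividing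
`C`, then the multisets of reductions of the `aᵢ` and of the `bᵢ` modulo `p` coincide. -/
theorem PTE_constant_prime_divisor_congruence (n : ℕ) (a b : Fin n → ℤ) (c : ℤ)
    (hc : c ≠ 0)
    (h : (∏ i, (X - Polynomial.C (a i))) - (∏ i, (X - Polynomial.C (b i))) = Polynomial.C c)
    (p : ℕ) (hp : p.Prime) (hdvd : (p : ℤ) ∣ c) :
    Multiset.map (fun i => ((a i : ZMod p))) Finset.univ.val
      = Multiset.map (fun i => ((b i : ZMod p))) Finset.univ.val := by
  haveI : Fact p.Prime := ⟨hp⟩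
  have key : ∀ f : Fin n → ℤ,
      ((∏ i, (X - Polynomial.C (f i))).map (Int.castRingHom (ZMod p))).roots
        = Multiset.map (fun i => ((f i : ZMod p))) Finset.univ.val := by
    intro f
    have e : (∏ i, (X - Polynomial.C (f i))).map (Int.castRingHom (ZMod p))
        = ((Multiset.map (fun i => ((f i : ZMod p))) Finset.univ.val).map
            (fun t => X - Polynomial.C t)).prod := by
      rw [Polynomial.map_prod, Multiset.map_map, Finset.prod]
      congr 1
      refine Multiset.map_congr rfl ?_
      intro i _
      simp only [Polynomial.map_sub, Polynomial.map_X, Polynomial.map_C, Function.comp,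
        eq_intCast (Int.castRingHom (ZMod p))]
    rw [e, Polynomial.roots_multiset_prod_X_sub_C]
  rw [← key a, ← key b]
  have h2 := congrArg (Polynomial.map (Int.castRingHom (ZMod p))) h
  have hc0 : (Int.castRingHom (ZMod p)) c = 0 := by
    rw [eq_intCast]
    exact (ZMod.intCast_zmod_eq_zero_iff_dvd c p).2 hdvd
  rw [Polynomial.map_sub, Polynomial.map_C, hc0, Polynomial.C_0, sub_eq_zero] at h2
  rw [h2]
end

section
/- For every ideal PTE solution (A, B) of size 10 over ℤ — that is, disjoint multisets A = {a_1,…,a_{10}} and B = {b_1,…,b_{10}} of integers with ∑ a_i^k = ∑ b_i^k for 1 ≤ k ≤ 9 — the prime 23 divides the constant C_{10}(A,B) = ∏_{i=1}^{10} (b_1 - a_i). -/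
/-! ## The computation

A multiset of residues mod 23 is stored as a list `l` of pairs (element, multiplicity).
`logs l x` is the discrete logarithm (base 5) of `∏ (x - a)^m`. -/

namespace PTE

noncomputable section

/-- Discrete logarithm to base 5 modulo 23. -/
def lg (x : ℕ) : ℕ :=
  [0, 0, 2, 16, 4, 1, 18, 19, 6, 10, 3, 9, 20, 14, 21, 17, 8, 7, 12, 15, 5, 13, 11].getD x 0

/-- Discrete logarithm of `∏ (x - a)^m` (factors with `x = a` are dropped). -/
def logs (l : List (ℕ × ℕ)) (x : ℕ) : ℕ :=
  (l.map fun p => p.2 * lg ((x + 23 - p.1) % 23)).sum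

/-- The 23 logarithms of `x - a`, times 6, packed in base 2048. -/
def pack (a : ℕ) : ℕ := ∑ x ∈ Finset.range 23, 6 * lg ((x + 23 - a) % 23) * 2048 ^ x

/-- Packed logarithms of a list. -/
def packL (l : List (ℕ × ℕ)) : ℕ := (l.map fun p => p.2 * pack p.1).sum

/-- Histogram of the fields of `V`. -/
def hist (V : ℕ) : ℕ := Nat.add (Nat.add (Nat.add (Nat.add (Nat.add (Nat.add (Nat.add (Nat.add (Nat.add (Nat.add (Nat.add (Nat.add (Nat.add (Nat.add (Nat.add (Nat.add (Nat.add (Nat.add (Nat.add (Nat.add (Nat.add (Nat.add (Nat.pow 2 (Nat.mod V 2048))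
    (Nat.pow 2 (Nat.mod (Nat.shiftRight V 11) 2048)))
    (Nat.pow 2 (Nat.mod (Nat.shiftRight V 22) 2048)))
    (Nat.pow 2 (Nat.mod (Nat.shiftRight V 33) 2048)))
    (Nat.pow 2 (Nat.mod (Nat.shiftRight V 44) 2048)))
    (Nat.pow 2 (Nat.mod (Nat.shiftRight V 55) 2048)))
    (Nat.pow 2 (Nat.mod (Nat.shiftRight V 66) 2048)))
    (Nat.pow 2 (Nat.mod (Nat.shiftRight V 77) 2048)))
    (Nat.pow 2 (Nat.mod (Nat.shiftRight V 88) 2048)))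
    (Nat.pow 2 (Nat.mod (Nat.shiftRight V 99) 2048)))
    (Nat.pow 2 (Nat.mod (Nat.shiftRight V 110) 2048)))
    (Nat.pow 2 (Nat.mod (Nat.shiftRight V 121) 2048)))
    (Nat.pow 2 (Nat.mod (Nat.shiftRight V 132) 2048)))
    (Nat.pow 2 (Nat.mod (Nat.shiftRight V 143) 2048)))
    (Nat.pow 2 (Nat.mod (Nat.shiftRight V 154) 2048)))
    (Nat.pow 2 (Nat.mod (Nat.shiftRight V 165) 2048)))
    (Nat.pow 2 (Nat.mod (Nat.shiftRight V 176) 2048)))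
    (Nat.pow 2 (Nat.mod (Nat.shiftRight V 187) 2048)))
    (Nat.pow 2 (Nat.mod (Nat.shiftRight V 198) 2048)))
    (Nat.pow 2 (Nat.mod (Nat.shiftRight V 209) 2048)))
    (Nat.pow 2 (Nat.mod (Nat.shiftRight V 220) 2048)))
    (Nat.pow 2 (Nat.mod (Nat.shiftRight V 231) 2048)))
    (Nat.pow 2 (Nat.mod (Nat.shiftRight V 242) 2048))

def ones : ℕ := 86420918583095482784349106649337958465

/-- The least possible number of distinct elements of the other side. -/
def thr (d : ℕ) : ℕ := Bool.rec (Nat.sub 11 d) d (Nat.ble 6 d)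

/-- True if no field of the histogram is at least `thr d`. -/
def quick (V d : ℕ) : Bool :=
  Nat.beq 0 (Nat.land (Nat.mul 32 ones)
    (Nat.add (Nat.mul (Nat.sub 32 (thr d)) ones) (Nat.mod (hist V) 5444517870735015415413993718908291383295)))

/-- Points in the class `c`. -/
def cls (l : List (ℕ × ℕ)) (c : ℕ) : List ℕ :=
  (List.range 23).filter fun x => Nat.beq (Nat.mod (logs l x) 22) c &&
    l.all fun p => Nat.beq p.2 0 || !(Nat.beq p.1 x)

/-- The moment of `l` for the polynomial `X^j ∏_(x ∈ X) (X - x)`. -/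
def moment (l : List (ℕ × ℕ)) (X : List ℕ) (j : ℕ) : ℕ :=
  (l.map fun p => p.2 * (p.1 ^ j * (X.map fun x => p.1 + 23 - x).prod)).sum

/-- The exact test: every large class violates some moment condition. -/
def slow (d : ℕ) (l : List (ℕ × ℕ)) : Bool :=
  (List.range 22).all fun c =>
    Nat.ble (Nat.succ (cls l c).length) (thr d) ||
      (List.range (10 - (cls l c).length)).any fun j => !(Nat.beq (moment l (cls l c) j % 23) 0)

def sel (q x : Bool) : Bool := Bool.rec x true q

def leaf (V d : ℕ) (l : List (ℕ × ℕ)) : Bool := sel (quick V d) (slow d l)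

/-- Table for the powers of 5: positions left, element, packed logarithms. -/
def tab : List (ℕ × ℕ × ℕ) :=
  [(21, 5, 296996120768452100340691048065253739979777907124250830847958368570203885640),
   (20, 2, 212332347713346596078919890059764179241682888412349514856279178386551738446),
   (19, 10, 848272968624307445501267378315746246912156056529276717496362660408213106772),
   (18, 4, 508996972293268657672109158264773644736039863231391273040022565644427915354),
   (17, 20, 84808659163695439396867662338949614428621433205687870107665539462259064928),
   (16, 8, 890780996238906775460743591558982537864156454174506137098282725990769721446),
   (15, 17, 42487312280395740929539554043439093522628027337661394471375923350088159340),
   (14, 16, 763298677742211442362860272056313571832357139166740857386303105483485028466),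
   (13, 11, 381701182838717033030815660329695877045833787350256840686968397323498070136),
   (12, 9, 594074809550998222359861625961688856790159665549685155826074704464597692542),
   (11, 22, 227889083902829557672216470671179198887501643614848304756401910809911296),
   (10, 18, 169948622263330856018767924447332644389711488300112847784703015045703098374),
   (9, 21, 111273966749428494957136948569911718206787911921312648806836870512652),
   (8, 13, 424167719159534133915907113549920574712135018819370163875878128340879650834),
   (7, 19, 678510683353006855723754242073532150319174041709420144699022789860556550168),
   (6, 3, 636313476998095931236741059817384637204112972339691277693817305983724187678),
   (5, 15, 806054965971434568470824900705985840078578925109641005087723083602658975780),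
   (4, 6, 339586837879875523987595142028143248917734295852740369466422790233627181098),
   (3, 7, 721308554087900585168940821509926663899929912568892430488370350989689049136),
   (2, 12, 127420101808164538006323546573778180295200000252202460572585665110422569014),
   (1, 14, 254819558854440582995380985078028110927633549765865321866526782773052608572)]

/-- Try all multiplicities `1..min m r` for the element `a`. -/
def mults (m1 g1 a L : ℕ) (k : ℕ → ℕ → ℕ → ℕ → List (ℕ × ℕ) → Bool) (V d : ℕ)
    (l : List (ℕ × ℕ)) (r m : ℕ) : Bool :=
  Nat.rec true (fun j ih => Bool.rec ih
    (Bool.rec false ih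
      (k (Nat.sub r (Nat.succ j)) (Bool.rec 22 (Nat.pred g1) (Nat.beq (Nat.succ j) m1))
        (Nat.add V (Nat.mul (Nat.succ j) L)) (Nat.succ d) ((a, Nat.succ j) :: l)))
    (Nat.ble (Nat.succ j) r)) m

/-- Depth first search; `r` elements remain to be placed, and at most `gap` zeros may follow. -/
def go (m1 g1 : ℕ) (t : List (ℕ × ℕ × ℕ)) : ℕ → ℕ → ℕ → ℕ → List (ℕ × ℕ) → Bool :=
  List.rec (fun r _ V d l => Bool.rec true (leaf V d l) (Nat.beq r 0))
    (fun p _ ih r gap V d l =>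
      Bool.rec
        (Bool.rec false (mults m1 g1 p.2.1 p.2.2 ih V d l r m1)
          (Bool.rec (ih r (Nat.pred gap) V d l) true (Nat.beq gap 0)))
        (Bool.rec true (leaf V d l) (Nat.ble p.1 gap)) (Nat.beq r 0)) t

def top (M m1 g1 : ℕ) : Bool :=
  go m1 g1 (tab.drop (g1 - 1)) (10 - M - m1) 0
    (M * 466716843832994934112699331934574999321603366123209328141111113338698334208
      + m1 * 551359962115012818347605480334358821166320328798050707470492052370868928578)
    2 [(1, m1), (0, M)]

def tops (M m1 g n : ℕ) : Bool := (List.range' g n).all fun g1 => top M m1 g1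

set_option maxRecDepth 100000

theorem tops_1_1_1 : tops 1 1 1 4 = true := by decide +kernel
theorem tops_1_1_5 : tops 1 1 5 2 = true := by decide +kernel
theorem tops_1_1_7 : tops 1 1 7 16 = true := by decide +kernel
theorem tops_2_1_1 : tops 2 1 1 22 = true := by decide +kernel
theorem tops_2_2_1 : tops 2 2 1 1 = true := by decide +kernel
theorem tops_2_2_2 : tops 2 2 2 1 = true := by decide +kernel
theorem tops_2_2_3 : tops 2 2 3 1 = true := by decide +kernel
theorem tops_2_2_4 : tops 2 2 4 1 = true := by decide +kernel
theorem tops_2_2_5 : tops 2 2 5 1 = true := by decide +kernel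
theorem tops_2_2_6 : tops 2 2 6 1 = true := by decide +kernel
theorem tops_2_2_7 : tops 2 2 7 2 = true := by decide +kernel
theorem tops_2_2_9 : tops 2 2 9 14 = true := by decide +kernel
theorem tops_3_1_1 : tops 3 1 1 22 = true := by decide +kernel
theorem tops_3_2_1 : tops 3 2 1 3 = true := by decide +kernel
theorem tops_3_2_4 : tops 3 2 4 19 = true := by decide +kernel
theorem tops_3_3_1 : tops 3 3 1 22 = true := by decide +kernel
theorem tops_4_1_1 : tops 4 1 1 22 = true := by decide +kernel
theorem tops_4_2_1 : tops 4 2 1 22 = true := by decide +kernel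
theorem tops_4_3_1 : tops 4 3 1 22 = true := by decide +kernel
theorem tops_4_4_1 : tops 4 4 1 22 = true := by decide +kernel
theorem tops_5_1_1 : tops 5 1 1 22 = true := by decide +kernel
theorem tops_5_2_1 : tops 5 2 1 22 = true := by decide +kernel
theorem tops_5_3_1 : tops 5 3 1 22 = true := by decide +kernel
theorem tops_5_4_1 : tops 5 4 1 22 = true := by decide +kernel
theorem tops_5_5_1 : tops 5 5 1 22 = true := by decide +kernel
theorem tops_6_1_1 : tops 6 1 1 22 = true := by decide +kernel
theorem tops_6_2_1 : tops 6 2 1 22 = true := by decide +kernel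
theorem tops_6_3_1 : tops 6 3 1 22 = true := by decide +kernel
theorem tops_6_4_1 : tops 6 4 1 22 = true := by decide +kernel
theorem tops_7_1_1 : tops 7 1 1 22 = true := by decide +kernel
theorem tops_7_2_1 : tops 7 2 1 22 = true := by decide +kernel
theorem tops_7_3_1 : tops 7 3 1 22 = true := by decide +kernel
theorem tops_8_1_1 : tops 8 1 1 22 = true := by decide +kernel
theorem tops_8_2_1 : tops 8 2 1 22 = true := by decide +kernel
theorem tops_9_1_1 : tops 9 1 1 22 = true := by decide +kernel

/-! ## Soundness of the packed histogram -/

theorem digit_extract (B : ℕ) (hB : 0 < B) : ∀ (n : ℕ) (v : ℕ → ℕ) (_ : ∀ i < n, v i < B) (x : ℕ),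
    x < n → (∑ i ∈ Finset.range n, v i * B ^ i) / B ^ x % B = v x := by
  intro n
  induction n with
  | zero => intro v _ x hx; omega
  | succ n ih =>
    intro v hv x hx
    have h1 : ∑ i ∈ Finset.range (n + 1), v i * B ^ i
        = v 0 + B * ∑ i ∈ Finset.range n, v (i + 1) * B ^ i := by
      rw [Finset.sum_range_succ', Finset.mul_sum, add_comm]
      congr 1
      · simp
      · apply Finset.sum_congr rfl
        intro i _
        ring
    rw [h1]
    cases x with
    | zero =>
      rw [pow_zero, Nat.div_one, Nat.add_mul_mod_self_left]
      exact Nat.mod_eq_of_lt (hv 0 (by omega))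
    | succ x =>
      rw [pow_succ', ← Nat.div_div_eq_div_mul, Nat.add_mul_div_left _ _ hB,
        Nat.div_eq_of_lt (hv 0 (by omega)), zero_add]
      exact ih (fun i => v (i + 1)) (fun i hi => hv (i + 1) (by omega)) x (by omega)

theorem packL_eq (l : List (ℕ × ℕ)) :
    packL l = ∑ x ∈ Finset.range 23, (6 * logs l x) * 2048 ^ x := by
  induction l with
  | nil => simp [packL, logs]
  | cons p l ih =>
    have h1 : packL (p :: l) = p.2 * pack p.1 + packL l := by simp [packL]
    rw [h1, ih, pack, Finset.mul_sum, ← Finset.sum_add_distrib]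
    apply Finset.sum_congr rfl
    intro x _
    have h2 : logs (p :: l) x = p.2 * lg ((x + 23 - p.1) % 23) + logs l x := by simp [logs]
    rw [h2]
    ring

theorem lg_le (x : ℕ) (hx : x < 23) : lg x ≤ 21 := by
  have h : ∀ x ∈ List.range 23, lg x ≤ 21 := by decide +kernel
  exact h x (by simpa using hx)

theorem logs_le (l : List (ℕ × ℕ)) (x : ℕ) : logs l x ≤ 21 * (l.map fun p => p.2).sum := by
  induction l with
  | nil => simp [logs]
  | cons p l ih =>
    have h2 : logs (p :: l) x = p.2 * lg ((x + 23 - p.1) % 23) + logs l x := by simp [logs]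
    have h3 := lg_le ((x + 23 - p.1) % 23) (Nat.mod_lt _ (by norm_num))
    rw [h2, List.map_cons, List.sum_cons]
    nlinarith

theorem hist_eq (V : ℕ) : hist V = ∑ x ∈ Finset.range 23, 2 ^ (V / 2048 ^ x % 2048) := by
  have h : ∀ x, V / 2048 ^ x = V >>> (11 * x) := by
    intro x
    rw [Nat.shiftRight_eq_div_pow, pow_mul]
    norm_num
  simp only [h, Finset.sum_range_succ, Finset.sum_range_zero, zero_add]
  rfl

theorem hist_packL (l : List (ℕ × ℕ)) (hl : (l.map fun p => p.2).sum = 10) :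
    hist (packL l) = ∑ x ∈ Finset.range 23, 64 ^ logs l x := by
  rw [hist_eq, packL_eq]
  apply Finset.sum_congr rfl
  intro x hx
  have hlt : ∀ i < 23, 6 * logs l i < 2048 := by
    intro i _
    have := logs_le l i
    rw [hl] at this
    omega
  rw [digit_extract 2048 (by norm_num) 23 (fun x => 6 * logs l x) hlt x (by simpa using hx),
    pow_mul]
  norm_num

theorem ones_eq : ones = ∑ c ∈ Finset.range 22, 64 ^ c := by decide +kernel

theorem hist_mod (l : List (ℕ × ℕ)) (hl : (l.map fun p => p.2).sum = 10) :
    hist (packL l) % 5444517870735015415413993718908291383295 =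
      ∑ c ∈ Finset.range 22,
        ((Finset.range 23).filter fun x => logs l x % 22 = c).card * 64 ^ c := by
  have hG : ∑ x ∈ Finset.range 23, 64 ^ (logs l x % 22) = ∑ c ∈ Finset.range 22,
        ((Finset.range 23).filter fun x => logs l x % 22 = c).card * 64 ^ c := by
    rw [← Finset.sum_fiberwise_of_maps_to (s := Finset.range 23) (t := Finset.range 22)
      (g := fun x => logs l x % 22)]
    · apply Finset.sum_congr rfl
      intro c _
      rw [Finset.sum_congr rfl (g := fun _ => 64 ^ c)]
      · rw [Finset.sum_const, smul_eq_mul]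
      · intro x hx
        rw [(Finset.mem_filter.mp hx).2]
    · intro x _
      exact Finset.mem_range.mpr (Nat.mod_lt _ (by norm_num))
  have hmod : hist (packL l) ≡ ∑ x ∈ Finset.range 23, 64 ^ (logs l x % 22)
      [MOD 5444517870735015415413993718908291383295] := by
    rw [hist_packL l hl]
    have : ∀ s : Finset ℕ, ∑ x ∈ s, 64 ^ logs l x ≡ ∑ x ∈ s, 64 ^ (logs l x % 22)
        [MOD 5444517870735015415413993718908291383295] := by
      intro s
      induction s using Finset.induction_on with
      | empty => simp; rfl
      | insert a s ha ih =>
        rw [Finset.sum_insert ha, Finset.sum_insert ha]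
        apply Nat.ModEq.add _ ih
        have h1 : (64 : ℕ) ^ logs l a = (64 ^ 22) ^ (logs l a / 22) * 64 ^ (logs l a % 22) := by
          rw [← pow_mul, ← pow_add, Nat.div_add_mod]
        rw [h1]
        have h2 : (64 : ℕ) ^ 22 ≡ 1 [MOD 5444517870735015415413993718908291383295] := by
          decide +kernel
        have h3 := (h2.pow (logs l a / 22)).mul_right (64 ^ (logs l a % 22))
        rwa [one_pow, one_mul] at h3
    exact this _
  have hlt : ∑ c ∈ Finset.range 22,
        ((Finset.range 23).filter fun x => logs l x % 22 = c).card * 64 ^ c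
        < 5444517870735015415413993718908291383295 := by
    calc _ ≤ ∑ c ∈ Finset.range 22, 23 * 64 ^ c := by
          apply Finset.sum_le_sum
          intro c _
          apply Nat.mul_le_mul_right
          exact (Finset.card_filter_le _ _).trans (by simp)
      _ < _ := by decide +kernel
  rw [hmod, hG, Nat.mod_eq_of_lt hlt]

theorem quick_sound (l : List (ℕ × ℕ)) (hl : (l.map fun p => p.2).sum = 10) (d c : ℕ)
    (hc : c < 22) (ht : thr d ≤ 32) (ht6 : 6 ≤ thr d)
    (h : thr d ≤ ((Finset.range 23).filter fun x => logs l x % 22 = c).card) :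
    quick (packL l) d = false := by
  by_contra hq
  rw [Bool.not_eq_false] at hq
  have h0 : 0 = (32 * ones) &&& ((32 - thr d) * ones +
      hist (packL l) % 5444517870735015415413993718908291383295) := Nat.eq_of_beq_eq_true hq
  set K : ℕ → ℕ := fun c => ((Finset.range 23).filter fun x => logs l x % 22 = c).card with hK
  have hK23 : ∀ c, K c ≤ 23 := fun c => (Finset.card_filter_le _ _).trans (by simp)
  have hW : (32 - thr d) * ones + hist (packL l) % 5444517870735015415413993718908291383295
      = ∑ c ∈ Finset.range 22, (32 - thr d + K c) * 64 ^ c := by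
    rw [hist_mod l hl, ones_eq, Finset.mul_sum, ← Finset.sum_add_distrib]
    apply Finset.sum_congr rfl
    intro c _
    ring
  have hO : 32 * ones = ∑ c ∈ Finset.range 22, 32 * 64 ^ c := by
    rw [ones_eq, Finset.mul_sum]
  have bit : ∀ v : ℕ → ℕ, (∀ i < 22, v i < 64) → 32 ≤ v c →
      (∑ c ∈ Finset.range 22, v c * 64 ^ c).testBit (6 * c + 5) = true := by
    intro v hv hvc
    have h1 := digit_extract 64 (by norm_num) 22 v hv c hc
    rw [Nat.testBit_eq_decide_div_mod_eq, pow_add, pow_mul, ← Nat.div_div_eq_div_mul]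
    have h2 := hv c hc
    norm_num
    omega
  have b1 := bit (fun _ => 32) (by intros; norm_num) le_rfl
  have b2 := bit (fun c => 32 - thr d + K c)
    (by intro i _; have := hK23 i; show 32 - thr d + K i < 64; omega)
    (by show 32 ≤ 32 - thr d + K c; have : thr d ≤ K c := h; omega)
  have h3 := congrArg (fun z => z.testBit (6 * c + 5)) h0
  simp only [Nat.testBit_and] at h3
  rw [hW, hO, b1, b2] at h3
  simp at h3

theorem slow_sound (l : List (ℕ × ℕ)) (d c : ℕ) (hs : slow d l = true) (hc : c < 22)
    (h : thr d ≤ (cls l c).length) :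
    ∃ j, j + (cls l c).length ≤ 9 ∧ moment l (cls l c) j % 23 ≠ 0 := by
  rw [slow, List.all_eq_true] at hs
  have h1 := hs c (by simpa using hc)
  rw [Bool.or_eq_true] at h1
  rcases h1 with h1 | h1
  · have := Nat.le_of_ble_eq_true h1
    omega
  · rw [List.any_eq_true] at h1
    obtain ⟨j, hj, hj2⟩ := h1
    refine ⟨j, ?_, ?_⟩
    · have := List.mem_range.mp hj
      omega
    · intro h0
      rw [h0] at hj2
      simp at hj2

/-! ## Soundness of the search -/

/-- A list is refuted by the leaf test. -/
def LeafOK (l : List (ℕ × ℕ)) : Prop := leaf (packL l) l.length l = true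

/-- Specification of the suffixes of `tab`. -/
def suf : ℕ → List (ℕ × ℕ × ℕ)
  | 0 => []
  | n + 1 => (n + 1, 5 ^ (21 - n) % 23, pack (5 ^ (21 - n) % 23)) :: suf n

theorem tab_drop (g : ℕ) (h1 : 1 ≤ g) (h2 : g ≤ 22) : tab.drop (g - 1) = suf (22 - g) := by
  have h : ∀ g ∈ List.range 22, tab.drop g = suf (21 - g) := by decide +kernel
  have h3 := h (g - 1) (by simp; omega)
  rw [h3]
  congr 1
  omega

/-- The list produced by multiplicities `ν`. -/
def rep (ν : ℕ → ℕ) : ℕ → List (ℕ × ℕ) → List (ℕ × ℕ)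
  | 0, l => l
  | n + 1, l => if ν n = 0 then rep ν n l else rep ν n ((5 ^ (21 - n) % 23, ν n) :: l)

theorem rep_zero (ν : ℕ → ℕ) (n : ℕ) (l : List (ℕ × ℕ)) (h : ∀ k < n, ν k = 0) :
    rep ν n l = l := by
  induction n with
  | zero => rfl
  | succ n ih =>
    rw [rep, if_pos (h n (by omega))]
    exact ih (fun k hk => h k (by omega))

theorem mults_sound (m1 g1 a L : ℕ) (k : ℕ → ℕ → ℕ → ℕ → List (ℕ × ℕ) → Bool) (V d : ℕ)
    (l : List (ℕ × ℕ)) (r m : ℕ) (h : mults m1 g1 a L k V d l r m = true) (j : ℕ) (hj : 1 ≤ j)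
    (hjm : j ≤ m) (hjr : j ≤ r) :
    k (r - j) (if j = m1 then g1 - 1 else 22) (V + j * L) (d + 1) ((a, j) :: l) = true := by
  induction m with
  | zero => omega
  | succ m ih =>
    have e : mults m1 g1 a L k V d l r (m + 1) = Bool.rec (mults m1 g1 a L k V d l r m)
      (Bool.rec false (mults m1 g1 a L k V d l r m)
      (k (r - (m + 1)) (Bool.rec 22 (g1 - 1) (Nat.beq (m + 1) m1))
        (V + (m + 1) * L) (d + 1) ((a, m + 1) :: l))) (Nat.ble (m + 1) r) := rfl
    rw [e] at h
    cases hb : Nat.ble (m + 1) r with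
    | false =>
      rw [hb] at h
      have h3 : ¬ (m + 1 ≤ r) := by
        intro h4
        rw [Nat.ble_eq_true_of_le h4] at hb
        cases hb
      exact ih h (by omega)
    | true =>
      rw [hb] at h
      dsimp only at h
      cases hk : (k (r - (m + 1)) (Bool.rec 22 (g1 - 1) (Nat.beq (m + 1) m1))
        (V + (m + 1) * L) (d + 1) ((a, m + 1) :: l)) with
      | false => rw [hk] at h; cases h
      | true =>
        rw [hk] at h
        by_cases hj' : j = m + 1
        · subst hj'
          rw [← hk]
          congr 1
          by_cases hm : m + 1 = m1
          · rw [if_pos hm]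
            have : Nat.beq (m + 1) m1 = true := by rw [hm]; exact Nat.beq_refl m1
            rw [this]
          · rw [if_neg hm]
            have : Nat.beq (m + 1) m1 = false := by
              rw [← Bool.not_eq_true]
              intro h5
              exact hm (Nat.eq_of_beq_eq_true h5)
            rw [this]
        · exact ih h (by omega)

theorem go_sound (m1 g1 : ℕ) (ν : ℕ → ℕ) : ∀ (n r gap V d : ℕ) (l : List (ℕ × ℕ)),
    n ≤ 21 → go m1 g1 (suf n) r gap V d l = true → V = packL l → d = l.length →
    ∑ k ∈ Finset.range n, ν k = r → (∀ k < n, ν k ≤ m1) →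
    (n ≤ gap ∨ ∃ k < n, n - 1 - k ≤ gap ∧ ν k ≠ 0) →
    (∀ k < n, ν k = m1 → k ≤ g1 - 1 ∨ ∃ k' < k, k - 1 - k' ≤ g1 - 1 ∧ ν k' ≠ 0) →
    LeafOK (rep ν n l) := by
  intro n
  induction n with
  | zero =>
    intro r gap V d l _ h hV hd hr _ _ _
    have : r = 0 := by simpa using hr.symm
    subst this hV hd
    exact h
  | succ n ih =>
    intro r gap V d l hn h hV hd hr hle hgap hgaps
    have e : go m1 g1 (suf (n + 1)) r gap V d l = Bool.rec
        (Bool.rec false (mults m1 g1 (5 ^ (21 - n) % 23) (pack (5 ^ (21 - n) % 23))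
            (go m1 g1 (suf n)) V d l r m1)
          (Bool.rec (go m1 g1 (suf n) r (gap - 1) V d l) true (Nat.beq gap 0)))
        (Bool.rec true (leaf V d l) (Nat.ble (n + 1) gap)) (Nat.beq r 0) := rfl
    rw [e] at h
    by_cases hr0 : r = 0
    · have hz : ∀ k < n + 1, ν k = 0 := by
        rw [hr0] at hr
        intro k hk
        exact (Finset.sum_eq_zero_iff.mp hr) k (by simpa using hk)
      rw [rep_zero ν _ l hz]
      have hg : n + 1 ≤ gap := by
        rcases hgap with hg | ⟨k, hk, _, hk2⟩
        · exact hg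
        · exact absurd (hz k hk) hk2
      subst hr0 hV hd
      rw [Nat.ble_eq_true_of_le hg] at h
      exact h
    · have hb : Nat.beq r 0 = false := by
        rw [← Bool.not_eq_true]
        intro h5
        exact hr0 (Nat.eq_of_beq_eq_true h5)
      rw [hb] at h
      dsimp only at h
      rw [Finset.sum_range_succ] at hr
      have hgaps' : ∀ k < n, ν k = m1 → k ≤ g1 - 1 ∨ ∃ k' < k, k - 1 - k' ≤ g1 - 1 ∧ ν k' ≠ 0 :=
        fun k hk => hgaps k (by omega)
      have hle' : ∀ k < n, ν k ≤ m1 := fun k hk => hle k (by omega)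
      cases hx : (Bool.rec (go m1 g1 (suf n) r (gap - 1) V d l) true (Nat.beq gap 0) : Bool) with
      | false => rw [hx] at h; cases h
      | true =>
        rw [hx] at h
        dsimp only at h
        by_cases hν : ν n = 0
        · rw [rep, if_pos hν]
          have hgap0 : gap ≠ 0 := by
            rintro rfl
            rcases hgap with hg | ⟨k, hk, hk1, hk2⟩
            · omega
            · have : k = n := by omega
              subst this
              exact hk2 hν
          have hb2 : Nat.beq gap 0 = false := by
            rw [← Bool.not_eq_true]
            intro h5
            exact hgap0 (Nat.eq_of_beq_eq_true h5)
          rw [hb2] at hx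
          refine ih r (gap - 1) V d l (by omega) hx hV hd (by omega) hle' ?_ hgaps'
          rcases hgap with hg | ⟨k, hk, hk1, hk2⟩
          · left; omega
          · right
            have : k ≠ n := by
              rintro rfl
              exact hk2 hν
            exact ⟨k, by omega, by omega, hk2⟩
        · rw [rep, if_neg hν]
          have h6 := mults_sound _ _ _ _ _ _ _ _ _ _ h (ν n) (by omega) (hle n (by omega))
            (by omega)
          refine ih _ _ _ _ _ (by omega) h6 ?_ ?_ (by omega) hle' ?_ hgaps'
          · rw [hV]
            simp [packL, add_comm]
          · simp [hd]
          · by_cases hm : ν n = m1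
            · rw [if_pos hm]
              exact hgaps n (by omega) hm
            · rw [if_neg hm]
              left; omega

theorem rep_sum (ν : ℕ → ℕ) (φ : ℕ → ℕ) (n : ℕ) (l : List (ℕ × ℕ)) :
    ((rep ν n l).map fun p => p.2 * φ p.1).sum =
      ∑ k ∈ Finset.range n, ν k * φ (5 ^ (21 - k) % 23) + (l.map fun p => p.2 * φ p.1).sum := by
  induction n generalizing l with
  | zero => simp [rep]
  | succ n ih =>
    rw [rep, Finset.sum_range_succ]
    split_ifs with h
    · rw [ih, h]; ring
    · rw [ih, List.map_cons, List.sum_cons]; ring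

theorem rep_length (ν : ℕ → ℕ) (n : ℕ) (l : List (ℕ × ℕ)) :
    (rep ν n l).length = ∑ k ∈ Finset.range n, (if ν k = 0 then 0 else 1) + l.length := by
  induction n generalizing l with
  | zero => simp [rep]
  | succ n ih =>
    rw [rep, Finset.sum_range_succ]
    split_ifs with h
    · rw [ih]; ring
    · rw [ih, List.length_cons]; ring

theorem rep_lt (ν : ℕ → ℕ) (n : ℕ) (l : List (ℕ × ℕ)) (hl : ∀ p ∈ l, p.1 < 23) :
    ∀ p ∈ rep ν n l, p.1 < 23 := by
  induction n generalizing l with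
  | zero => exact hl
  | succ n ih =>
    rw [rep]
    split_ifs with h
    · exact ih l hl
    · apply ih
      intro p hp
      rcases List.mem_cons.mp hp with rfl | hp
      · exact Nat.mod_lt _ (by norm_num)
      · exact hl p hp

/-! ## From lists to families of residues -/

/-- The list `l` describes the family `A`. -/
structure Rep (A : Fin 10 → ZMod 23) (l : List (ℕ × ℕ)) : Prop where
  len : l.length = (Finset.univ.image A).card
  sum : ∀ φ : ZMod 23 → ℕ, ∑ i, φ (A i) = (l.map fun p => p.2 * φ (p.1 : ZMod 23)).sum
  lt : ∀ p ∈ l, p.1 < 23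

/-- The properties of a solution modulo 23 with nonzero constant. -/
def Bad (A B : Fin 10 → ZMod 23) : Prop :=
  (∃ c, c ≠ 0 ∧ ∀ j, ∏ i, (B j - A i) = c) ∧
    ∀ P : Polynomial (ZMod 23), P.natDegree ≤ 9 → ∑ i, P.eval (A i) = ∑ i, P.eval (B i)

theorem Bad.ne {A B : Fin 10 → ZMod 23} (h : Bad A B) (i j : Fin 10) : B j ≠ A i := by
  obtain ⟨⟨c, hc, hj⟩, _⟩ := h
  intro he
  apply hc
  rw [← hj j]
  exact Finset.prod_eq_zero (Finset.mem_univ i) (by rw [he, sub_self])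

theorem Bad.affine {A B : Fin 10 → ZMod 23} (h : Bad A B) (s t : ZMod 23) (hs : s ≠ 0) :
    Bad (fun i => s * A i + t) (fun i => s * B i + t) := by
  have : Fact (Nat.Prime 23) := ⟨by norm_num⟩
  obtain ⟨⟨c, hc, hj⟩, hP⟩ := h
  refine ⟨⟨s ^ 10 * c, mul_ne_zero (pow_ne_zero _ hs) hc, ?_⟩, ?_⟩
  · intro j
    rw [← hj j]
    have : ∀ i, (s * B j + t) - (s * A i + t) = s * (B j - A i) := by intro i; ring
    simp only [this, Finset.prod_mul_distrib, Finset.prod_const, Finset.card_univ,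
      Fintype.card_fin]
  · intro P hd
    have h1 := hP (P.comp (Polynomial.C s * Polynomial.X + Polynomial.C t)) (by
      refine Polynomial.natDegree_comp_le.trans ?_
      have := Polynomial.natDegree_linear_le (a := s) (b := t)
      nlinarith)
    simpa [Polynomial.eval_comp] using h1

theorem image_affine_card (A : Fin 10 → ZMod 23) (s t : ZMod 23) (hs : s ≠ 0) :
    (Finset.univ.image fun i => s * A i + t).card = (Finset.univ.image A).card := by
  have : Fact (Nat.Prime 23) := ⟨by norm_num⟩
  have h : (Finset.univ.image fun i => s * A i + t)
      = (Finset.univ.image A).image (fun x => s * x + t) := by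
    rw [Finset.image_image]; rfl
  rw [h]
  apply Finset.card_image_of_injective
  intro x y hxy
  have h2 : s * x = s * y := by simpa using hxy
  exact mul_left_cancel₀ hs h2

theorem Bad.card {A B : Fin 10 → ZMod 23} (h : Bad A B) :
    11 ≤ (Finset.univ.image A).card + (Finset.univ.image B).card := by
  have : Fact (Nat.Prime 23) := ⟨by norm_num⟩
  by_contra hlt
  set U := (Finset.univ.image A ∪ Finset.univ.image B).erase (A 0) with hU
  have hcard : U.card ≤ 9 := by
    have h1 : A 0 ∈ Finset.univ.image A ∪ Finset.univ.image B :=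
      Finset.mem_union_left _ (Finset.mem_image_of_mem _ (Finset.mem_univ _))
    have h2 := Finset.card_union_le (Finset.univ.image A) (Finset.univ.image B)
    rw [hU, Finset.card_erase_of_mem h1]
    omega
  have hP := h.2 (∏ x ∈ U, (Polynomial.X - Polynomial.C x)) (by
    rw [Polynomial.natDegree_finsetProd_X_sub_C_eq_card]; exact hcard)
  simp only [Polynomial.eval_prod, Polynomial.eval_sub, Polynomial.eval_X, Polynomial.eval_C] at hP
  have hB : ∑ i, ∏ x ∈ U, (B i - x) = 0 := by
    apply Finset.sum_eq_zero
    intro i _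
    apply Finset.prod_eq_zero (i := B i)
    · rw [hU, Finset.mem_erase]
      exact ⟨h.ne 0 i, Finset.mem_union_right _ (Finset.mem_image_of_mem _ (Finset.mem_univ _))⟩
    · exact sub_self _
  have hA : ∑ i, ∏ x ∈ U, (A i - x)
      = ((Finset.univ.filter fun i => A i = A 0).card : ZMod 23) * ∏ x ∈ U, (A 0 - x) := by
    rw [← nsmul_eq_mul, ← Finset.sum_const, Finset.sum_filter]
    apply Finset.sum_congr rfl
    intro i _
    split_ifs with hi
    · rw [hi]
    · apply Finset.prod_eq_zero (i := A i)
      · rw [hU, Finset.mem_erase]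
        exact ⟨hi, Finset.mem_union_left _ (Finset.mem_image_of_mem _ (Finset.mem_univ _))⟩
      · exact sub_self _
  rw [hB, hA] at hP
  rcases mul_eq_zero.mp hP with h0 | h0
  · rw [ZMod.natCast_eq_zero_iff] at h0
    have h1 : (Finset.univ.filter fun i => A i = A 0).card ≤ 10 :=
      (Finset.card_filter_le _ _).trans (by simp)
    have h2 : 0 < (Finset.univ.filter fun i => A i = A 0).card :=
      Finset.card_pos.mpr ⟨0, by simp⟩
    have := Nat.le_of_dvd h2 h0
    omega
  · obtain ⟨x, hx, hx0⟩ := Finset.prod_eq_zero_iff.mp h0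
    rw [hU, Finset.mem_erase] at hx
    exact hx.1 (sub_eq_zero.mp hx0).symm

theorem sub_val (y : ZMod 23) (a : ℕ) (ha : a < 23) :
    (y - (a : ZMod 23)).val = (y.val + 23 - a) % 23 := by
  have h : ∀ y : ZMod 23, ∀ a ∈ List.range 23,
      (y - (a : ZMod 23)).val = (y.val + 23 - a) % 23 := by decide +kernel
  exact h y a (by simpa using ha)

theorem lg_spec (z : ZMod 23) (hz : z ≠ 0) : (5 : ZMod 23) ^ lg z.val = z := by
  have h : ∀ z : ZMod 23, z ≠ 0 → (5 : ZMod 23) ^ lg z.val = z := by decide +kernel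
  exact h z hz

theorem pow_five_mod (a : ℕ) : (5 : ZMod 23) ^ a = 5 ^ (a % 22) := by
  have h : (5 : ZMod 23) ^ 22 = 1 := by decide +kernel
  conv_lhs => rw [← Nat.div_add_mod a 22, pow_add, pow_mul, h, one_pow, one_mul]

theorem pow_five_inj {a b : ℕ} (h : (5 : ZMod 23) ^ a = 5 ^ b) : a % 22 = b % 22 := by
  have h1 : ∀ a ∈ List.range 22, ∀ b ∈ List.range 22, (5 : ZMod 23) ^ a = 5 ^ b → a = b := by
    decide +kernel
  rw [pow_five_mod a, pow_five_mod b] at h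
  exact h1 _ (by simp [Nat.mod_lt]) _ (by simp [Nat.mod_lt]) h

theorem Rep.sumZ {A : Fin 10 → ZMod 23} {l : List (ℕ × ℕ)} (h : Rep A l)
    (φ : ZMod 23 → ZMod 23) :
    ∑ i, φ (A i) = (l.map fun p => (p.2 : ZMod 23) * φ (p.1 : ZMod 23)).sum := by
  have h1 := congrArg (Nat.cast (R := ZMod 23)) (h.sum fun x => (φ x).val)
  rw [Nat.cast_sum, Nat.cast_list_sum, List.map_map] at h1
  simpa [Function.comp_def] using h1

theorem thr_spec (d D : ℕ) (h1 : 1 ≤ d) (h10 : d ≤ 10) (hD : d ≤ D) (hs : 11 ≤ d + D) :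
    6 ≤ thr d ∧ thr d ≤ 32 ∧ thr d ≤ D := by
  have h : ∀ d ∈ List.range 11, 1 ≤ d → thr d = max d (11 - d) := by decide +kernel
  rw [h d (by simp; omega) h1]
  omega

theorem sel_aux (q x : Bool) (hq : q = false) (h : sel q x = true) :
    x = true := by
  subst hq
  exact h

attribute [irreducible] sel

theorem slow_of_leaf {l : List (ℕ × ℕ)} (hq : quick (packL l) l.length = false)
    (h : LeafOK l) : slow l.length l = true := sel_aux _ _ hq h

attribute [irreducible] quick slow thr

theorem leaf_false {A B : Fin 10 → ZMod 23} {l : List (ℕ × ℕ)} (hR : Rep A l) (hl : LeafOK l)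
    (hB : Bad A B) (hd : (Finset.univ.image A).card ≤ (Finset.univ.image B).card) : False := by
  have : Fact (Nat.Prime 23) := ⟨by norm_num⟩
  have hcard := hB.card
  have hA1 : 1 ≤ (Finset.univ.image A).card :=
    Finset.card_pos.mpr ⟨A 0, Finset.mem_image_of_mem _ (Finset.mem_univ _)⟩
  have hA10 : (Finset.univ.image A).card ≤ 10 := Finset.card_image_le.trans (by simp)
  obtain ⟨ht6, ht32, htD⟩ := thr_spec _ _ hA1 hA10 hd hcard
  rw [← hR.len] at ht6 ht32 htD
  have hsum : (l.map fun p => p.2).sum = 10 := by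
    have := hR.sum fun _ => 1
    simpa using this.symm
  -- logarithms
  have hlogs : ∀ j, logs l (B j).val = ∑ i, lg (B j - A i).val := by
    intro j
    rw [hR.sum fun a => lg (B j - a).val, logs]
    congr 1
    apply List.map_congr_left
    intro p hp
    rw [sub_val _ _ (hR.lt p hp)]
  obtain ⟨c, hc, hj⟩ := hB.1
  have hpow : ∀ j, (5 : ZMod 23) ^ logs l (B j).val = c := by
    intro j
    rw [hlogs, ← Finset.prod_pow_eq_pow_sum, ← hj j]
    apply Finset.prod_congr rfl
    intro i _
    exact lg_spec _ (sub_ne_zero.mpr (hB.ne i j))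
  set c0 := logs l (B 0).val % 22 with hc0
  have hc0' : c0 < 22 := Nat.mod_lt _ (by norm_num)
  have hcl : ∀ j, logs l (B j).val % 22 = c0 := fun j =>
    pow_five_inj ((hpow j).trans (hpow 0).symm)
  have hval : ((Finset.univ.image B).image ZMod.val).card = (Finset.univ.image B).card :=
    Finset.card_image_of_injective _ (ZMod.val_injective 23)
  have hmem : ∀ j, (B j).val ∈ cls l c0 := by
    intro j
    rw [cls, List.mem_filter]
    refine ⟨by simpa using ZMod.val_lt (B j), ?_⟩
    rw [Bool.and_eq_true, List.all_eq_true]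
    refine ⟨?_, ?_⟩
    · have : Nat.mod (logs l (B j).val) 22 = c0 := hcl j
      rw [this]
      exact Nat.beq_refl c0
    · intro p hp
      rw [Bool.or_eq_true]
      by_cases hp1 : p.1 = (B j).val
      · left
        have h0 := hR.sum fun x => if x = B j then 1 else 0
        rw [Finset.sum_eq_zero (by
          intro i _
          rw [if_neg (fun he => hB.ne i j he.symm)])] at h0
        have h2 := List.sum_eq_zero_iff.mp h0.symm _ (List.mem_map_of_mem hp)
        rw [hp1, ZMod.natCast_zmod_val, if_pos rfl, mul_one] at h2
        rw [h2]
        rfl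
      · right
        have : Nat.beq p.1 (B j).val = false := by
          rw [← Bool.not_eq_true]
          intro h5
          exact hp1 (Nat.eq_of_beq_eq_true h5)
        rw [this]
        rfl
  have hquick : quick (packL l) l.length = false := by
    apply quick_sound l hsum _ c0 hc0' ht32 ht6
    refine htD.trans ?_
    rw [← hval]
    apply Finset.card_le_card
    intro x hx
    obtain ⟨y, hy, rfl⟩ := Finset.mem_image.mp hx
    obtain ⟨j, _, rfl⟩ := Finset.mem_image.mp hy
    rw [Finset.mem_filter]
    exact ⟨by simpa using ZMod.val_lt (B j), hcl j⟩
  have hslow : slow l.length l = true := slow_of_leaf hquick hl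
  have hlen : thr l.length ≤ (cls l c0).length := by
    refine htD.trans ?_
    rw [← hval]
    refine le_trans (Finset.card_le_card ?_) (List.toFinset_card_le (cls l c0))
    intro x hx
    obtain ⟨y, hy, rfl⟩ := Finset.mem_image.mp hx
    obtain ⟨j, _, rfl⟩ := Finset.mem_image.mp hy
    exact List.mem_toFinset.mpr (hmem j)
  obtain ⟨j, hj9, hmom⟩ := slow_sound l _ c0 hslow hc0' hlen
  have hcls23 : ∀ x ∈ cls l c0, x < 23 := by
    intro x hx
    rw [cls, List.mem_filter] at hx
    simpa using hx.1
  generalize cls l c0 = X at *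
  -- the moment polynomial
  set Q : Polynomial (ZMod 23) :=
    (X.map fun x : ℕ => Polynomial.X - Polynomial.C (x : ZMod 23)).prod with hQ
  have hQd : Q.natDegree ≤ X.length := by
    rw [hQ]
    clear * -
    induction X with
    | nil => simp
    | cons x X ih =>
      rw [List.map_cons, List.prod_cons, List.length_cons]
      refine Polynomial.natDegree_mul_le.trans ?_
      rw [Polynomial.natDegree_X_sub_C]
      omega
  have hQe : ∀ z, Q.eval z = (X.map fun x : ℕ => z - (x : ZMod 23)).prod := by
    intro z
    rw [hQ]
    clear * -
    induction X with
    | nil => simp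
    | cons x X ih =>
      rw [List.map_cons, List.prod_cons, Polynomial.eval_mul, ih, List.map_cons, List.prod_cons,
        Polynomial.eval_sub, Polynomial.eval_X, Polynomial.eval_C]
  have hP := hB.2 (Polynomial.X ^ j * Q) (by
    refine Polynomial.natDegree_mul_le.trans ?_
    rw [Polynomial.natDegree_X_pow]
    omega)
  have hPB : ∑ i, (Polynomial.X ^ j * Q).eval (B i) = 0 := by
    apply Finset.sum_eq_zero
    intro i _
    rw [Polynomial.eval_mul, hQe]
    have : (X.map fun x : ℕ => B i - (x : ZMod 23)).prod = 0 := by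
      apply List.prod_eq_zero
      rw [List.mem_map]
      exact ⟨_, hmem i, by rw [ZMod.natCast_zmod_val, sub_self]⟩
    rw [this, mul_zero]
  have hS := hR.sumZ fun a => (Polynomial.X ^ j * Q).eval a
  beta_reduce at hS
  rw [hP, hPB] at hS
  apply hmom
  have hprod : ∀ a : ℕ, (((X.map fun x => a + 23 - x).prod : ℕ) : ZMod 23)
      = (X.map fun x : ℕ => (a : ZMod 23) - (x : ZMod 23)).prod := by
    intro a
    rw [Nat.cast_list_prod, List.map_map]
    refine congrArg List.prod (List.map_congr_left ?_)
    intro x hx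
    have := hcls23 x hx
    rw [Function.comp_apply, Nat.cast_sub (by omega), Nat.cast_add]
    have h23 : ((23 : ℕ) : ZMod 23) = 0 := ZMod.natCast_self 23
    rw [h23, add_zero]
  rw [← Nat.dvd_iff_mod_eq_zero, ← ZMod.natCast_eq_zero_iff, moment, Nat.cast_list_sum,
    List.map_map, hS]
  refine congrArg List.sum (List.map_congr_left ?_)
  intro p hp
  rw [Function.comp_apply, Polynomial.eval_mul, hQe, Polynomial.eval_pow, Polynomial.eval_X,
    Nat.cast_mul, Nat.cast_mul, Nat.cast_pow, hprod]

/-! ## Normal forms -/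

theorem norm_exists (μ : ℕ → ℕ) (hper : ∀ i, μ (i + 22) = μ i) (hne : ∃ i, μ i ≠ 0) :
    ∃ e g1, 1 ≤ g1 ∧ g1 ≤ 22 ∧ μ e ≠ 0 ∧ (∀ i, μ i ≤ μ e) ∧
      (∀ k, 1 ≤ k → k < g1 → μ (e + k) = 0) ∧ μ (e + g1) ≠ 0 ∧
      (∀ i, μ i = μ e → ∃ k, 1 ≤ k ∧ k ≤ g1 ∧ μ (i + k) ≠ 0) := by
  classical
  have hmod : ∀ i, μ i = μ (i % 22) := by
    intro i
    have h : ∀ q r, μ (r + 22 * q) = μ r := by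
      intro q r
      induction q with
      | zero => simp
      | succ q ih =>
        have : r + 22 * (q + 1) = (r + 22 * q) + 22 := by ring
        rw [this, hper, ih]
    conv_lhs => rw [← Nat.mod_add_div i 22]
    exact h _ _
  have hgap : ∀ i, ∃ g, 1 ≤ g ∧ g ≤ 22 ∧
      (∀ k, 1 ≤ k → k < g → μ (i + k) = 0) ∧ (μ i ≠ 0 → μ (i + g) ≠ 0) := by
    intro i
    by_cases h0 : μ i = 0
    · exact ⟨1, le_refl _, by norm_num, by intro k h1 h2; omega, fun h => absurd h0 h⟩
    · have hex : ∃ g, 1 ≤ g ∧ μ (i + g) ≠ 0 := ⟨22, by norm_num, by rw [hper]; exact h0⟩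
      refine ⟨Nat.find hex, (Nat.find_spec hex).1, ?_, ?_, fun _ => (Nat.find_spec hex).2⟩
      · exact Nat.find_min' hex ⟨by norm_num, by rw [hper]; exact h0⟩
      · intro k h1 h2
        have := Nat.find_min hex h2
        by_contra h3
        exact this ⟨h1, h3⟩
  choose gap hg1 hg2 hg3 hg4 using hgap
  obtain ⟨e, he, hmax⟩ := Finset.exists_max_image (Finset.range 22)
    (fun i => μ i * 23 + gap i) ⟨0, by simp⟩
  have hle : ∀ i, μ i ≤ μ e := by
    intro i
    rw [hmod i]
    have h1 := hmax (i % 22) (by rw [Finset.mem_range]; exact Nat.mod_lt _ (by norm_num))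
    have h2 := hg2 (i % 22)
    have h3 := hg2 e
    have h4 := hg1 (i % 22)
    have h5 := hg1 e
    omega
  have he0 : μ e ≠ 0 := by
    obtain ⟨i, hi⟩ := hne
    have := hle i
    omega
  refine ⟨e, gap e, hg1 e, hg2 e, he0, hle, hg3 e, hg4 e he0, ?_⟩
  intro i hi
  refine ⟨gap (i % 22), hg1 _, ?_, ?_⟩
  · have h1 := hmax (i % 22) (by rw [Finset.mem_range]; exact Nat.mod_lt _ (by norm_num))
    have h2 := hmod i
    rw [← h2, hi] at h1
    omega
  · have h2 := hmod i
    have h3 := hg4 (i % 22) (by rw [← h2, hi]; exact he0)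
    rw [hmod] at h3 ⊢
    rwa [Nat.mod_add_mod] at h3

theorem sum_split (F : ℕ → ℕ) (g : ℕ) (h1 : 1 ≤ g) (hF : ∀ k, 1 ≤ k → k < g → F k = 0) :
    ∑ i ∈ Finset.range 22, F i = F 0 + ∑ k ∈ Finset.range (22 - g), F (21 - k) := by
  rw [Finset.sum_range_succ' F 21, add_comm, ← Finset.sum_range_reflect]
  refine congrArg (fun z => F 0 + z) ?_
  have e : ∑ j ∈ Finset.range 21, F (21 - 1 - j + 1) = ∑ j ∈ Finset.range 21, F (21 - j) := by
    apply Finset.sum_congr rfl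
    intro j hj
    rw [Finset.mem_range] at hj
    congr 1
    omega
  rw [e]
  symm
  apply Finset.sum_subset
  · intro x hx
    rw [Finset.mem_range] at hx ⊢
    omega
  · intro x hx hx2
    rw [Finset.mem_range] at hx hx2
    exact hF _ (by omega) (by omega)

/-- Multiplicity of `x` in the family `A`. -/
def cnt (A : Fin 10 → ZMod 23) (x : ZMod 23) : ℕ := (Finset.univ.filter fun i => A i = x).card

theorem cnt_sum (A : Fin 10 → ZMod 23) (φ : ZMod 23 → ℕ) :
    ∑ i, φ (A i) = ∑ x, cnt A x * φ x := by
  rw [← Finset.sum_fiberwise Finset.univ A]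
  apply Finset.sum_congr rfl
  intro x _
  rw [cnt, Finset.card_eq_sum_ones, Finset.sum_mul]
  apply Finset.sum_congr rfl
  intro i hi
  rw [(Finset.mem_filter.mp hi).2, one_mul]

theorem cnt_card (A : Fin 10 → ZMod 23) :
    (Finset.univ.image A).card = ∑ x, if cnt A x = 0 then 0 else 1 := by
  have h : Finset.univ.image A = Finset.univ.filter fun x => cnt A x ≠ 0 := by
    ext x
    rw [Finset.mem_filter, Finset.mem_image, cnt, ne_eq, Finset.card_eq_zero, ← ne_eq,
      ← Finset.nonempty_iff_ne_empty]
    constructor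
    · rintro ⟨i, _, hi⟩
      exact ⟨Finset.mem_univ _, i, by simpa using hi⟩
    · rintro ⟨_, i, hi⟩
      exact ⟨i, Finset.mem_univ _, by simpa using hi⟩
  rw [h, Finset.card_filter]
  apply Finset.sum_congr rfl
  intro x _
  by_cases hx : cnt A x = 0
  · rw [if_pos hx, if_neg (not_not.mpr hx)]
  · rw [if_neg hx, if_pos hx]

theorem univ_sum (F : ZMod 23 → ℕ) : ∑ x, F x = F 0 + ∑ i ∈ Finset.range 22, F (5 ^ i) := by
  have h : (Finset.univ : Finset (ZMod 23))
      = insert 0 ((Finset.range 22).image fun i => (5 : ZMod 23) ^ i) := by decide +kernel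
  have h0 : (0 : ZMod 23) ∉ (Finset.range 22).image fun i => (5 : ZMod 23) ^ i := by
    decide +kernel
  rw [h, Finset.sum_insert h0, Finset.sum_image]
  intro a ha b hb hab
  have := pow_five_inj hab
  simp only [Finset.coe_range, Set.mem_Iio] at ha hb
  rwa [Nat.mod_eq_of_lt ha, Nat.mod_eq_of_lt hb] at this

theorem cnt_affine (A : Fin 10 → ZMod 23) (s t : ZMod 23) (hs : s ≠ 0) (x : ZMod 23) :
    cnt (fun i => s * A i + t) (s * x + t) = cnt A x := by
  have : Fact (Nat.Prime 23) := ⟨by norm_num⟩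
  unfold cnt
  congr 1
  ext i
  simp only [Finset.mem_filter, Finset.mem_univ, true_and, add_left_inj]
  exact ⟨fun h => mul_left_cancel₀ hs h, fun h => by rw [h]⟩

/-- The normal form. -/
def Normal (A : Fin 10 → ZMod 23) : Prop :=
  (∀ x, cnt A x ≤ cnt A 0) ∧ ((∀ k : ℕ, cnt A (5 ^ k) = 0) ∨ ∃ g : ℕ, 1 ≤ g ∧ g ≤ 22 ∧
    cnt A 1 ≠ 0 ∧ (∀ i : ℕ, cnt A (5 ^ i) ≤ cnt A 1) ∧
    (∀ k, 1 ≤ k → k < g → cnt A (5 ^ k) = 0) ∧ cnt A (5 ^ g) ≠ 0 ∧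
    (∀ i : ℕ, cnt A (5 ^ i) = cnt A 1 → ∃ k, 1 ≤ k ∧ k ≤ g ∧ cnt A (5 ^ (i + k)) ≠ 0))

theorem exists_normal (A : Fin 10 → ZMod 23) :
    ∃ s t : ZMod 23, s ≠ 0 ∧ Normal (fun i => s * A i + t) := by
  have h5 : (5 : ZMod 23) ≠ 0 := by decide +kernel
  have h22 : (5 : ZMod 23) ^ 22 = 1 := by decide +kernel
  have : Fact (Nat.Prime 23) := ⟨by norm_num⟩
  obtain ⟨x0, _, hx0⟩ := Finset.exists_max_image (Finset.univ : Finset (ZMod 23)) (cnt A)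
    ⟨0, Finset.mem_univ _⟩
  have key : ∀ s : ZMod 23, s ≠ 0 → ∀ y,
      cnt (fun i => s * A i + (- s * x0)) y = cnt A (s⁻¹ * y + x0) := by
    intro s hs y
    rw [← cnt_affine A s (- s * x0) hs]
    congr 1
    rw [mul_add, mul_inv_cancel_left₀ hs]
    ring
  by_cases hz : ∀ k : ℕ, cnt A (5 ^ k + x0) = 0
  · refine ⟨1, - 1 * x0, one_ne_zero, ?_, Or.inl ?_⟩
    · intro x
      rw [key 1 one_ne_zero, key 1 one_ne_zero, mul_zero, zero_add]
      exact hx0 _ (Finset.mem_univ _)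
    · intro k
      rw [key 1 one_ne_zero, inv_one, one_mul]
      exact hz k
  · push Not at hz
    obtain ⟨e, g, hg1, hg2, he0, hle, hgz, hgn, hlast⟩ :=
      norm_exists (fun k => cnt A (5 ^ k + x0)) (by
        intro i
        simp only [pow_add, h22, mul_one]) hz
    have hs : ((5 : ZMod 23) ^ e)⁻¹ ≠ 0 := inv_ne_zero (pow_ne_zero _ h5)
    have key2 : ∀ k : ℕ, cnt (fun i => ((5 : ZMod 23) ^ e)⁻¹ * A i
        + (- ((5 : ZMod 23) ^ e)⁻¹ * x0)) (5 ^ k) = cnt A (5 ^ (e + k) + x0) := by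
      intro k
      rw [key _ hs, inv_inv, pow_add]
    have key1 := key2 0
    rw [pow_zero, add_zero] at key1
    refine ⟨((5 : ZMod 23) ^ e)⁻¹, - ((5 : ZMod 23) ^ e)⁻¹ * x0, hs, ?_, Or.inr ⟨g, hg1, hg2, ?_⟩⟩
    · intro x
      rw [key _ hs, key _ hs, mul_zero, zero_add]
      exact hx0 _ (Finset.mem_univ _)
    · simp only [key2, key1]
      refine ⟨he0, fun i => hle _, hgz, hgn, ?_⟩
      intro i hi
      obtain ⟨k, hk1, hk2, hk3⟩ := hlast (e + i) hi
      exact ⟨k, hk1, hk2, by rwa [add_assoc] at hk3⟩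

theorem top_eq (M m g L0 L1 : ℕ)
    (h0 : L0 = 466716843832994934112699331934574999321603366123209328141111113338698334208)
    (h1 : L1 = 551359962115012818347605480334358821166320328798050707470492052370868928578) :
    top M m g = go m g (tab.drop (g - 1)) (10 - M - m) 0 (M * L0 + m * L1) 2
      [(1, m), (0, M)] := by
  subst h0 h1
  rfl

theorem pack_zero :
    pack 0 = 466716843832994934112699331934574999321603366123209328141111113338698334208 := by
  decide +kernel

theorem pack_one :
    pack 1 = 551359962115012818347605480334358821166320328798050707470492052370868928578 := by
  decide +kernel

attribute [irreducible] pack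

theorem sum_pair (f : ℕ → ℕ) (a b M m : ℕ) :
    M * f a + m * f b = (List.map (fun p : ℕ × ℕ => p.2 * f p.1) [(b, m), (a, M)]).sum := by
  simp only [List.map_cons, List.map_nil, List.sum_cons, List.sum_nil]
  ring

theorem packL_pair (a b M m : ℕ) : M * pack a + m * pack b = packL [(b, m), (a, M)] :=
  sum_pair pack a b M m

theorem packL_two (M m : ℕ) : M * pack 0 + m * pack 1 = packL [(1, m), (0, M)] :=
  packL_pair 0 1 M m

theorem top_go_aux (M m g V : ℕ) (t : List (ℕ × ℕ × ℕ)) (h : top M m g = true)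
    (ht : tab.drop (g - 1) = t) (hV : M * pack 0 + m * pack 1 = V) :
    go m g t (10 - M - m) 0 V 2 [(1, m), (0, M)] = true := by
  have h3 := top_eq M m g _ _ pack_zero pack_one
  subst ht hV
  rw [h3] at h
  exact h

theorem top_go (M m g : ℕ) (h : top M m g = true) (h1 : 1 ≤ g) (h2 : g ≤ 22) :
    go m g (suf (22 - g)) (10 - M - m) 0 (packL [(1, m), (0, M)]) 2 [(1, m), (0, M)] = true :=
  top_go_aux M m g _ _ h (tab_drop g h1 h2) (packL_two M m)

theorem tops_use {M m g n g1 : ℕ} (h : tops M m g n = true) (h1 : g ≤ g1) (h2 : g1 < g + n) :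
    top M m g1 = true := by
  rw [tops, List.all_eq_true] at h
  apply h
  rw [List.mem_range']
  exact ⟨g1 - g, by omega, by omega⟩

attribute [irreducible] top

theorem all_tops (M m g : ℕ) (h1 : 1 ≤ m) (h2 : m ≤ M) (h3 : M + m ≤ 10) (h4 : 1 ≤ g)
    (h5 : g ≤ 22) : top M m g = true := by
  have hM1 : 1 ≤ M := by omega
  have hM : M ≤ 9 := by omega
  interval_cases M
  · have hm : m ≤ 1 := by omega
    clear h2 h3
    interval_cases m
    · rcases Nat.lt_or_ge g 5 with hg | hg
      · exact tops_use tops_1_1_1 (by omega) (by omega)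
      rcases Nat.lt_or_ge g 7 with hg | hg
      · exact tops_use tops_1_1_5 (by omega) (by omega)
      exact tops_use tops_1_1_7 (by omega) (by omega)
  · have hm : m ≤ 2 := by omega
    clear h2 h3
    interval_cases m
    · exact tops_use tops_2_1_1 (by omega) (by omega)
    · rcases Nat.lt_or_ge g 2 with hg | hg
      · exact tops_use tops_2_2_1 (by omega) (by omega)
      rcases Nat.lt_or_ge g 3 with hg | hg
      · exact tops_use tops_2_2_2 (by omega) (by omega)
      rcases Nat.lt_or_ge g 4 with hg | hg
      · exact tops_use tops_2_2_3 (by omega) (by omega)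
      rcases Nat.lt_or_ge g 5 with hg | hg
      · exact tops_use tops_2_2_4 (by omega) (by omega)
      rcases Nat.lt_or_ge g 6 with hg | hg
      · exact tops_use tops_2_2_5 (by omega) (by omega)
      rcases Nat.lt_or_ge g 7 with hg | hg
      · exact tops_use tops_2_2_6 (by omega) (by omega)
      rcases Nat.lt_or_ge g 9 with hg | hg
      · exact tops_use tops_2_2_7 (by omega) (by omega)
      exact tops_use tops_2_2_9 (by omega) (by omega)
  · have hm : m ≤ 3 := by omega
    clear h2 h3
    interval_cases m
    · exact tops_use tops_3_1_1 (by omega) (by omega)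
    · rcases Nat.lt_or_ge g 4 with hg | hg
      · exact tops_use tops_3_2_1 (by omega) (by omega)
      exact tops_use tops_3_2_4 (by omega) (by omega)
    · exact tops_use tops_3_3_1 (by omega) (by omega)
  · have hm : m ≤ 4 := by omega
    clear h2 h3
    interval_cases m
    · exact tops_use tops_4_1_1 (by omega) (by omega)
    · exact tops_use tops_4_2_1 (by omega) (by omega)
    · exact tops_use tops_4_3_1 (by omega) (by omega)
    · exact tops_use tops_4_4_1 (by omega) (by omega)
  · have hm : m ≤ 5 := by omega
    clear h2 h3
    interval_cases m
    · exact tops_use tops_5_1_1 (by omega) (by omega)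
    · exact tops_use tops_5_2_1 (by omega) (by omega)
    · exact tops_use tops_5_3_1 (by omega) (by omega)
    · exact tops_use tops_5_4_1 (by omega) (by omega)
    · exact tops_use tops_5_5_1 (by omega) (by omega)
  · have hm : m ≤ 4 := by omega
    clear h2 h3
    interval_cases m
    · exact tops_use tops_6_1_1 (by omega) (by omega)
    · exact tops_use tops_6_2_1 (by omega) (by omega)
    · exact tops_use tops_6_3_1 (by omega) (by omega)
    · exact tops_use tops_6_4_1 (by omega) (by omega)
  · have hm : m ≤ 3 := by omega
    clear h2 h3
    interval_cases m
    · exact tops_use tops_7_1_1 (by omega) (by omega)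
    · exact tops_use tops_7_2_1 (by omega) (by omega)
    · exact tops_use tops_7_3_1 (by omega) (by omega)
  · have hm : m ≤ 2 := by omega
    clear h2 h3
    interval_cases m
    · exact tops_use tops_8_1_1 (by omega) (by omega)
    · exact tops_use tops_8_2_1 (by omega) (by omega)
  · have hm : m ≤ 1 := by omega
    clear h2 h3
    interval_cases m
    · exact tops_use tops_9_1_1 (by omega) (by omega)

theorem leafOK_ten : LeafOK [(0, 10)] := by
  unfold LeafOK
  decide +kernel

theorem exists_rep (A : Fin 10 → ZMod 23) (hA : Normal A) : ∃ l, Rep A l ∧ LeafOK l := by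
  obtain ⟨hmax, h⟩ := hA
  have hsum : ∀ φ : ZMod 23 → ℕ, ∑ i, φ (A i)
      = cnt A 0 * φ 0 + ∑ i ∈ Finset.range 22, cnt A (5 ^ i) * φ (5 ^ i) := by
    intro φ
    rw [cnt_sum, univ_sum]
  have hcard := cnt_card A
  rw [univ_sum] at hcard
  have hten := hsum fun _ => 1
  simp only [Finset.sum_const, Finset.card_univ, Fintype.card_fin, smul_eq_mul, mul_one] at hten
  rcases h with h | ⟨g, hg1, hg2, h1, hle, hgz, hgn, hlast⟩
  · simp only [h, Finset.sum_const_zero, add_zero, zero_mul, if_true] at hsum hcard hten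
    refine ⟨[(0, 10)], ⟨?_, ?_, ?_⟩, leafOK_ten⟩
    · rw [hcard, ← hten]; rfl
    · intro φ
      rw [hsum, ← hten]
      simp
    · intro p hp
      rw [List.mem_singleton.mp hp]
      norm_num
  · have hsp : ∀ φ : ZMod 23 → ℕ, ∑ i ∈ Finset.range 22, cnt A (5 ^ i) * φ (5 ^ i)
        = cnt A 1 * φ 1 + ∑ k ∈ Finset.range (22 - g), cnt A (5 ^ (21 - k)) * φ (5 ^ (21 - k)) := by
      intro φ
      rw [sum_split (fun i => cnt A (5 ^ i) * φ (5 ^ i)) g hg1 (by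
        intro k hk1 hk2
        simp only [hgz k hk1 hk2, zero_mul]), pow_zero]
    rw [sum_split (fun i => if cnt A (5 ^ i) = 0 then 0 else 1) g hg1 (by
        intro k hk1 hk2
        simp only [hgz k hk1 hk2, if_true]), pow_zero] at hcard
    have hsp1 := hsp fun _ => 1
    simp only [mul_one] at hsp1
    rw [hsp1] at hten
    have hm1 : cnt A 1 ≤ cnt A 0 := hmax 1
    have h0 : cnt A 0 ≠ 0 := by omega
    refine ⟨rep (fun k => cnt A (5 ^ (21 - k))) (22 - g) [(1, cnt A 1), (0, cnt A 0)],
      ⟨?_, ?_, ?_⟩, ?_⟩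
    · rw [rep_length, hcard, if_neg h0, if_neg h1, List.length_cons, List.length_singleton]
      ring
    · intro φ
      rw [hsum, hsp, rep_sum _ (fun x : ℕ => φ (x : ZMod 23))]
      simp only [List.map_cons, List.map_nil, List.sum_cons, List.sum_nil, ZMod.natCast_mod,
        Nat.cast_pow, Nat.cast_ofNat, Nat.cast_one, Nat.cast_zero]
      ring
    · apply rep_lt
      intro p hp
      simp only [List.mem_cons, List.not_mem_nil, or_false] at hp
      rcases hp with rfl | rfl <;> norm_num
    · have htop := top_go (cnt A 0) (cnt A 1) g
        (all_tops _ _ _ (by omega) hm1 (by omega) hg1 hg2) hg1 hg2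
      refine go_sound _ _ _ _ _ _ _ _ _ (by omega) htop rfl rfl (by omega) ?_ ?_ ?_
      · intro k _
        exact hle _
      · by_cases hg : g = 22
        · left; omega
        · right
          refine ⟨21 - g, by omega, by omega, ?_⟩
          have : 21 - (21 - g) = g := by omega
          simpa only [this] using hgn
      · intro k hk hkm
        obtain ⟨q, hq1, hq2, hq3⟩ := hlast _ hkm
        by_cases hkq : k < q
        · left; omega
        · right
          refine ⟨k - q, by omega, by omega, ?_⟩
          have : 21 - (k - q) = 21 - k + q := by omega
          simpa only [this] using hq3

theorem no_bad {A B : Fin 10 → ZMod 23} (h : Bad A B)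
    (hd : (Finset.univ.image A).card ≤ (Finset.univ.image B).card) : False := by
  obtain ⟨s, t, hs, hn⟩ := exists_normal A
  obtain ⟨l, hl1, hl2⟩ := exists_rep _ hn
  refine leaf_false hl1 hl2 (h.affine s t hs) ?_
  rw [image_affine_card A s t hs, image_affine_card B s t hs]
  exact hd

/-! ## Reduction modulo 23 -/

theorem esymm_eq (a b : Fin 10 → ℤ)
    (hmom : ∀ k : ℕ, 1 ≤ k → k ≤ 9 → ∑ i, (a i) ^ k = ∑ i, (b i) ^ k) (k : ℕ) (hk : k ≤ 9) :
    MvPolynomial.aeval a (MvPolynomial.esymm (Fin 10) ℤ k)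
      = MvPolynomial.aeval b (MvPolynomial.esymm (Fin 10) ℤ k) := by
  induction k using Nat.strong_induction_on with
  | _ k ih =>
    rcases Nat.eq_zero_or_pos k with rfl | hpos
    · simp
    · have hps : ∀ j, 1 ≤ j → j ≤ 9 → MvPolynomial.aeval a (MvPolynomial.psum (Fin 10) ℤ j)
          = MvPolynomial.aeval b (MvPolynomial.psum (Fin 10) ℤ j) := by
        intro j h1 h2
        simpa [MvPolynomial.psum] using hmom j h1 h2
      have hN := MvPolynomial.mul_esymm_eq_sum (Fin 10) ℤ k
      have ha := congrArg (MvPolynomial.aeval a) hN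
      have hb := congrArg (MvPolynomial.aeval b) hN
      simp only [map_mul, map_sum, map_pow, map_neg, map_one, map_natCast] at ha hb
      have hk0 : (k : ℤ) ≠ 0 := by exact_mod_cast hpos.ne'
      apply mul_left_cancel₀ hk0
      rw [ha, hb]
      congr 1
      apply Finset.sum_congr rfl
      intro x hx
      rw [Finset.mem_filter, Finset.HasAntidiagonal.mem_antidiagonal] at hx
      obtain ⟨h1, h2⟩ := hx
      have h3 : x.1 < k := h2
      rw [ih x.1 h3 (by omega), hps x.2 (by omega) (by omega)]

theorem prod_diff (a b : Fin 10 → ℤ)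
    (hmom : ∀ k : ℕ, 1 ≤ k → k ≤ 9 → ∑ i, (a i) ^ k = ∑ i, (b i) ^ k) :
    ∃ C : ℤ, ∀ x : ℤ, ∏ i, (x - a i) = ∏ i, (x - b i) + C := by
  have key : ∀ (a : Fin 10 → ℤ) (x : ℤ), ∏ i, (x - a i)
      = ∑ j ∈ Finset.range 11, (-1) ^ j *
        (MvPolynomial.aeval a (MvPolynomial.esymm (Fin 10) ℤ j) * x ^ (10 - j)) := by
    intro a x
    have h := congrArg (Polynomial.eval x)
      (Multiset.prod_X_sub_X_eq_sum_esymm (Finset.univ.val.map a))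
    simp only [MvPolynomial.aeval_esymm_eq_multiset_esymm]
    rw [Multiset.map_map] at h
    simpa [Polynomial.eval_finsetSum, Polynomial.eval_multiset_prod, Function.comp_def,
      Finset.prod] using h
  refine ⟨MvPolynomial.aeval a (MvPolynomial.esymm (Fin 10) ℤ 10)
    - MvPolynomial.aeval b (MvPolynomial.esymm (Fin 10) ℤ 10), ?_⟩
  intro x
  rw [key a, key b, Finset.sum_range_succ, Finset.sum_range_succ _ 10]
  have : ∀ j ∈ Finset.range 10, (-1 : ℤ) ^ j *
        (MvPolynomial.aeval a (MvPolynomial.esymm (Fin 10) ℤ j) * x ^ (10 - j))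
      = (-1 : ℤ) ^ j *
        (MvPolynomial.aeval b (MvPolynomial.esymm (Fin 10) ℤ j) * x ^ (10 - j)) := by
    intro j hj
    rw [Finset.mem_range] at hj
    rw [esymm_eq a b hmom j (by omega)]
  rw [Finset.sum_congr rfl this]
  rw [add_assoc]
  refine congrArg (fun z => _ + z) ?_
  generalize MvPolynomial.aeval a (MvPolynomial.esymm (Fin 10) ℤ 10) = u
  generalize MvPolynomial.aeval b (MvPolynomial.esymm (Fin 10) ℤ 10) = v
  norm_num

theorem poly_moment (a b : Fin 10 → ℤ)
    (hmom : ∀ k : ℕ, 1 ≤ k → k ≤ 9 → ∑ i, (a i) ^ k = ∑ i, (b i) ^ k)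
    (P : Polynomial (ZMod 23)) (hP : P.natDegree ≤ 9) :
    ∑ i, P.eval ((a i : ℤ) : ZMod 23) = ∑ i, P.eval ((b i : ℤ) : ZMod 23) := by
  have h : ∀ a : Fin 10 → ℤ, ∑ i, P.eval ((a i : ℤ) : ZMod 23)
      = ∑ k ∈ Finset.range 10, P.coeff k * ((∑ i, a i ^ k : ℤ) : ZMod 23) := by
    intro a
    have : ∀ i, P.eval ((a i : ℤ) : ZMod 23)
        = ∑ k ∈ Finset.range 10, P.coeff k * ((a i : ℤ) : ZMod 23) ^ k := fun i =>
      Polynomial.eval_eq_sum_range' (by omega) _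
    simp only [this]
    rw [Finset.sum_comm]
    apply Finset.sum_congr rfl
    intro k _
    rw [Int.cast_sum, Finset.mul_sum]
    simp only [Int.cast_pow]
  rw [h a, h b]
  apply Finset.sum_congr rfl
  intro k hk
  rw [Finset.mem_range] at hk
  rcases Nat.eq_zero_or_pos k with rfl | hpos
  · simp
  · rw [hmom k hpos (by omega)]

theorem bad_of_moments (a b : Fin 10 → ℤ)
    (hmom : ∀ k : ℕ, 1 ≤ k → k ≤ 9 → ∑ i, (a i) ^ k = ∑ i, (b i) ^ k)
    (h : ¬ (23 : ℤ) ∣ ∏ i, (b 0 - a i)) :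
    Bad (fun i => ((a i : ℤ) : ZMod 23)) (fun i => ((b i : ℤ) : ZMod 23)) ∧
      Bad (fun i => ((b i : ℤ) : ZMod 23)) (fun i => ((a i : ℤ) : ZMod 23)) := by
  obtain ⟨C, hC⟩ := prod_diff a b hmom
  have hb : ∀ j, ∏ i, (b j - a i) = C := by
    intro j
    rw [hC, Finset.prod_eq_zero (Finset.mem_univ j) (sub_self _), zero_add]
  have ha : ∀ j, ∏ i, (a j - b i) = - C := by
    intro j
    have h1 := hC (a j)
    rw [Finset.prod_eq_zero (Finset.mem_univ j) (sub_self _)] at h1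
    linarith
  rw [hb] at h
  have hc : ((C : ℤ) : ZMod 23) ≠ 0 := by
    intro h0
    exact h ((ZMod.intCast_zmod_eq_zero_iff_dvd C 23).mp h0)
  refine ⟨⟨⟨C, hc, ?_⟩, poly_moment a b hmom⟩, ⟨⟨-C, neg_ne_zero.mpr hc, ?_⟩, ?_⟩⟩
  · intro j
    rw [← hb j, Int.cast_prod]
    simp only [Int.cast_sub]
  · intro j
    rw [← Int.cast_neg, ← ha j, Int.cast_prod]
    simp only [Int.cast_sub]
  · exact fun P hP => (poly_moment a b hmom P hP).symm

end

end PTE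

/-- For every ideal PTE solution `(A, B)` of size `10` over `ℤ`, the prime `23` divides
the constant `C₁₀(A,B) = ∏ᵢ (b₁ - aᵢ)`. -/
theorem twentythree_divides_C10 (a b : Fin 10 → ℤ)
    (hdisj : Disjoint (Multiset.map a Finset.univ.val) (Multiset.map b Finset.univ.val))
    (hmom : ∀ k : ℕ, 1 ≤ k → k ≤ 9 → ∑ i, (a i) ^ k = ∑ i, (b i) ^ k) :
    (23 : ℤ) ∣ ∏ i, (b 0 - a i) := by
  by_contra h
  obtain ⟨h1, h2⟩ := PTE.bad_of_moments a b hmom h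
  rcases le_total (Finset.univ.image fun i => ((a i : ℤ) : ZMod 23)).card
    (Finset.univ.image fun i => ((b i : ℤ) : ZMod 23)).card with hd | hd
  · exact PTE.no_bad h1 hd
  · exact PTE.no_bad h2 hd
end

section
/- Let ω = e^{2πi/3}, let ζ₆ = 1 + ω be a primitive sixth root of unity, and set A = ⋃_{j=0}^{5} ζ₆^j · {3, 2ω+9} and B = ⋃_{j=0}^{5} ζ₆^j · {2ω+11, 7ω+11}, each a set of 12 Eisenstein integers. Then (A, B) is a symmetric ideal PTE solution of size 12 over ℤ[ω]: A and B are disjoint, A = -A, B = -B, and ∑_{a∈A} a^k = ∑_{b∈B} b^k for every k with 1 ≤ k ≤ 11. -/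
/-- `ω = e^{2πi/3}`. -/
noncomputable def eisensteinOmega : ℂ := Complex.exp (2 * Real.pi * Complex.I / 3)

/-- With `ζ₆ = 1 + ω`, the set `A = ⋃_{j=0}^{5} ζ₆^j · {3, 2ω+9}` of 12 Eisenstein
integers. -/
noncomputable def eisensteinA12 : Multiset ℂ :=
  (Multiset.range 6).bind fun j =>
    {(1 + eisensteinOmega) ^ j * 3, (1 + eisensteinOmega) ^ j * (2 * eisensteinOmega + 9)}

/-- With `ζ₆ = 1 + ω`, the set `B = ⋃_{j=0}^{5} ζ₆^j · {2ω+11, 7ω+11}` of 12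
Eisenstein integers. -/
noncomputable def eisensteinB12 : Multiset ℂ :=
  (Multiset.range 6).bind fun j =>
    {(1 + eisensteinOmega) ^ j * (2 * eisensteinOmega + 11),
      (1 + eisensteinOmega) ^ j * (7 * eisensteinOmega + 11)}

theorem eisensteinOmega_rel : eisensteinOmega ^ 2 + eisensteinOmega + 1 = 0 := by
  have h3 : IsPrimitiveRoot eisensteinOmega 3 := by
    have := Complex.isPrimitiveRoot_exp 3 (by norm_num)
    simpa [eisensteinOmega] using this
  have h := h3.geom_sum_eq_zero (by norm_num)
  simp only [Finset.sum_range_succ, Finset.sum_range_zero] at h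
  linear_combination h

/-- The orbit of a pair under the powers of `z`, written out. -/
theorem pair_bind (z p q : ℂ) :
    ((Multiset.range 6).bind fun j => ({z ^ j * p, z ^ j * q} : Multiset ℂ)) =
      {z ^ 0 * p} + {z ^ 0 * q} + {z ^ 1 * p} + {z ^ 1 * q} + {z ^ 2 * p} + {z ^ 2 * q} +
      {z ^ 3 * p} + {z ^ 3 * q} + {z ^ 4 * p} + {z ^ 4 * q} + {z ^ 5 * p} + {z ^ 5 * q} := by
  have h (a b : ℂ) : ({a, b} : Multiset ℂ) = {a} + {b} := rfl
  simp only [h, Multiset.range_succ, Multiset.cons_bind, Multiset.range_zero,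
    Multiset.zero_bind]
  abel

theorem pair_neg (z p q : ℂ) (hz : z ^ 3 = -1) :
    ((Multiset.range 6).bind fun j => ({z ^ j * p, z ^ j * q} : Multiset ℂ)).map (fun x => -x) =
      (Multiset.range 6).bind fun j => ({z ^ j * p, z ^ j * q} : Multiset ℂ) := by
  have h3 (r : ℂ) : z ^ 3 * r = -(z ^ 0 * r) := by rw [hz]; ring
  have h4 (r : ℂ) : z ^ 4 * r = -(z ^ 1 * r) := by linear_combination z * r * hz
  have h5 (r : ℂ) : z ^ 5 * r = -(z ^ 2 * r) := by linear_combination z ^ 2 * r * hz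
  rw [pair_bind]
  simp only [Multiset.map_add, Multiset.map_singleton, h3, h4, h5, neg_neg]
  abel

theorem pair_sum (z p q : ℂ) (k : ℕ) :
    (((Multiset.range 6).bind fun j => ({z ^ j * p, z ^ j * q} : Multiset ℂ)).map
      (fun x => x ^ k)).sum =
      (1 + z ^ k + (z ^ k) ^ 2 + (z ^ k) ^ 3 + (z ^ k) ^ 4 + (z ^ k) ^ 5) * (p ^ k + q ^ k) := by
  rw [pair_bind]
  simp only [Multiset.map_add, Multiset.map_singleton, Multiset.sum_add, Multiset.sum_singleton,
    mul_pow]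
  ring

theorem pair_norm (z p q x : ℂ) (hz : Complex.normSq z = 1)
    (hx : x ∈ (Multiset.range 6).bind fun j => ({z ^ j * p, z ^ j * q} : Multiset ℂ)) :
    Complex.normSq x = Complex.normSq p ∨ Complex.normSq x = Complex.normSq q := by
  simp only [Multiset.mem_bind, Multiset.insert_eq_cons, Multiset.mem_cons,
    Multiset.mem_singleton] at hx
  obtain ⟨j, -, h | h⟩ := hx
  · left; simp [h, hz]
  · right; simp [h, hz]

theorem eisensteinOmega_re_im :
    eisensteinOmega.re = -1 / 2 ∧ eisensteinOmega.im * eisensteinOmega.im = 3 / 4 := by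
  have h := eisensteinOmega_rel
  have hr := congrArg Complex.re h
  have hi := congrArg Complex.im h
  simp only [pow_two, Complex.add_re, Complex.mul_re, Complex.one_re, Complex.zero_re] at hr
  simp only [pow_two, Complex.add_im, Complex.mul_im, Complex.one_im, Complex.zero_im] at hi
  have hi' : eisensteinOmega.im * (2 * eisensteinOmega.re + 1) = 0 := by linarith
  rcases mul_eq_zero.mp hi' with h0 | h0
  · rw [h0] at hr
    nlinarith [sq_nonneg (eisensteinOmega.re + 1 / 2)]
  · have hre : eisensteinOmega.re = -1 / 2 := by linarith
    refine ⟨hre, ?_⟩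
    rw [hre] at hr
    linarith

theorem normSq_lin (a b : ℝ) :
    Complex.normSq ((b : ℂ) * eisensteinOmega + a) = a ^ 2 - a * b + b ^ 2 := by
  obtain ⟨hr, hi⟩ := eisensteinOmega_re_im
  simp only [Complex.normSq_apply, Complex.add_re, Complex.mul_re, Complex.ofReal_re,
    Complex.ofReal_im, Complex.add_im, Complex.mul_im, hr]
  linear_combination b ^ 2 * hi

/-- The symmetric ideal PTE solution of size `12` over the Eisenstein integers:
`A = ⋃ ζ₆^j·{3, 2ω+9}` and `B = ⋃ ζ₆^j·{2ω+11, 7ω+11}` are disjoint, `A = -A`,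
`B = -B`, and their `k`-th moments agree for `1 ≤ k ≤ 11`. -/
theorem eisenstein_size12_solution :
    Disjoint eisensteinA12 eisensteinB12 ∧
    eisensteinA12.map (fun z => -z) = eisensteinA12 ∧
    eisensteinB12.map (fun z => -z) = eisensteinB12 ∧
    ∀ k : ℕ, 1 ≤ k → k ≤ 11 →
      (eisensteinA12.map (fun z => z ^ k)).sum = (eisensteinB12.map (fun z => z ^ k)).sum := by
  have hw := eisensteinOmega_rel
  have hz3 : (1 + eisensteinOmega) ^ 3 = -1 := by
    linear_combination (eisensteinOmega + 2) * hw
  have hz2 : (1 + eisensteinOmega) ^ 2 = (1 + eisensteinOmega) - 1 := by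
    linear_combination hw
  have hzn : Complex.normSq (1 + eisensteinOmega) = 1 := by
    have := normSq_lin 1 1
    norm_num at this
    rwa [add_comm]
  have n1 : Complex.normSq 3 = 9 := by
    have := normSq_lin 3 0
    norm_num at this
    norm_num [this]
  have n2 : Complex.normSq (2 * eisensteinOmega + 9) = 67 := by
    have := normSq_lin 9 2
    norm_num at this
    exact this
  have n3 : Complex.normSq (2 * eisensteinOmega + 11) = 103 := by
    have := normSq_lin 11 2
    norm_num at this
    exact this
  have n4 : Complex.normSq (7 * eisensteinOmega + 11) = 93 := by
    have := normSq_lin 11 7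
    norm_num at this
    exact this
  refine ⟨?_, pair_neg _ _ _ hz3, pair_neg _ _ _ hz3, ?_⟩
  · rw [Multiset.disjoint_left]
    intro x hA hB
    have h1 := pair_norm _ _ _ x hzn hA
    have h2 := pair_norm _ _ _ x hzn hB
    rw [n1, n2] at h1
    rw [n3, n4] at h2
    rcases h1 with h1 | h1 <;> rcases h2 with h2 | h2 <;> rw [h1] at h2 <;> norm_num at h2
  · intro k hk1 hk2
    unfold eisensteinA12 eisensteinB12
    rw [pair_sum, pair_sum]
    by_cases hk : k = 6
    · subst hk
      congr 1
      generalize eisensteinOmega = w at hw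
      have e2 : w ^ 2 = -1 - w := by linear_combination hw
      have e3 : w ^ 3 = 1 := by linear_combination (w - 1) * hw
      have e4 : w ^ 4 = w := by linear_combination w * e3
      have e5 : w ^ 5 = -1 - w := by linear_combination w ^ 2 * e3 + e2
      have e6 : w ^ 6 = 1 := by linear_combination (w ^ 3 + 1) * e3
      ring_nf
      rw [e2, e3, e4, e5, e6]
      ring
    · generalize 1 + eisensteinOmega = z at hz3 hz2
      have hz6 : (z ^ k) ^ 6 = 1 := by
        rw [← pow_mul, mul_comm, pow_mul, show z ^ 6 = (z ^ 3) ^ 2 by ring, hz3]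
        norm_num
      have hne : z ^ k ≠ 1 := by
        intro h
        have hp : IsPrimitiveRoot z 6 := by
          refine IsPrimitiveRoot.mk_of_lt z (by norm_num) ?_ ?_
          · rw [show z ^ 6 = (z ^ 3) ^ 2 by ring, hz3]; norm_num
          · intro l hl hl6 hl1
            have z4 : z ^ 4 = - z := by linear_combination z * hz3
            have z5 : z ^ 5 = 1 - z := by linear_combination z ^ 2 * hz3 - hz2
            have key : z = 0 ∨ z = 1 ∨ z = 2 ∨ z = -1 := by
              interval_cases l
              · right; left; simpa using hl1
              · right; right; left; linear_combination hl1 - hz2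
              · rw [hz3] at hl1; norm_num at hl1
              · right; right; right; linear_combination z4 - hl1
              · left; linear_combination z5 - hl1
            rcases key with h | h | h | h <;> rw [h] at hz2 <;> norm_num at hz2
        have := (hp.pow_eq_one_iff_dvd k).mp h
        omega
      have hs : 1 + z ^ k + (z ^ k) ^ 2 + (z ^ k) ^ 3 + (z ^ k) ^ 4 + (z ^ k) ^ 5 = 0 := by
        apply mul_left_cancel₀ (sub_ne_zero.mpr hne)
        linear_combination hz6
      rw [hs, zero_mul, zero_mul]
end
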